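/- Let F be a monotone hazard rate probability distribution supported on the non-negative reals with density f and strictly increasing virtual valuation φ. Then R^1_F ≥ (1/e)·A_F + (5/(4e) − 1/(2e²))·V_F, where R^1_F = ∫₀^∞ (φ⁻¹(z)·(1−F(φ⁻¹(z))) + F(φ⁻¹(z))·R*_F)·f(z) dz. -/

import Mathlib

open MeasureTheory Real Set

/-!
Write `G = 1 - F`, `V = ∫ G`, `r = ψ 0 * G (ψ 0)` and `c = 1 / e`, where `ψ` inverts the virtual
valuation. A nondecreasing hazard rate means that `log G` is concave, and this is used three times.
The tangent of `log G` at `ψ z` has slope `-1 / (ψ z - z)`, so `c * G z ≤ G (ψ z)`. Integrating the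
tangent bound at `ψ 0` gives `c * V ≤ r`. Concavity between `0` and `2 * z` gives
`G (2 * z) ≤ G z ^ 2`, so that `∫ z * G z * f z = (∫ G ^ 2) / 2 ≥ V / 4`.

The first bound implies, pointwise in `z`,
`c * (ψ z - z) * G (ψ z) + c * (z - r) * G z ≤ (ψ z - r) * G (ψ z)`.
Integrating against `f`, with `∫ G * f = 1 / 2`, bounds the revenue below by
`c * A + c * V / 4 + (1 - c / 2) * r`, and `c * V ≤ r` finishes the proof.
-/

open Filter Topology

theorem mul_sub_add_mul_sub_le {R : Type*} [CommRing R] [LinearOrder R] [IsStrictOrderedRing R]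
    {c r x z u v : R} (hc0 : 0 ≤ c) (hc1 : c ≤ 1) (hu : 0 ≤ u)
    (huv : u ≤ v) (hcv : c * v ≤ u) (hzx : z ≤ x) (hrx : r ≤ x) :
    c * ((x - z) * u) + c * ((z - r) * v) ≤ (x - r) * u := by
  have hc1 : 0 ≤ 1 - c := sub_nonneg.2 hc1
  rcases le_total r z with hrz | hzr
  · have h_cv : (z - r) * (c * v) ≤ (z - r) * u := mul_le_mul_of_nonneg_left hcv (sub_nonneg.2 hrz)
    have h_gap : 0 ≤ (1 - c) * ((x - z) * u) :=
      mul_nonneg hc1 (mul_nonneg (sub_nonneg.2 hzx) hu)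
    linarith
  · have h_uv : 0 ≤ c * ((r - z) * (v - u)) :=
      mul_nonneg hc0 (mul_nonneg (sub_nonneg.2 hzr) (sub_nonneg.2 huv))
    have h_gap : 0 ≤ (1 - c) * ((x - r) * u) :=
      mul_nonneg hc1 (mul_nonneg (sub_nonneg.2 hrx) hu)
    linarith

section Calculus

theorem le_add_mul_sub_of_concaveOn_of_hasDerivAt {s : Set ℝ} {u : ℝ → ℝ} {u' a x : ℝ}
    (hu : ConcaveOn ℝ s u) (ha : a ∈ s) (hx : x ∈ s) (hu' : HasDerivAt u u' a) :
    u x ≤ u a + u' * (x - a) := by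
  rcases lt_trichotomy x a with hxa | rfl | hax
  · have h := hu.le_slope_of_hasDerivAt hx ha hxa hu'
    rw [slope_def_field, le_div_iff₀ (sub_pos.2 hxa)] at h
    linarith
  · simp
  · have h := hu.slope_le_of_hasDerivAt ha hx hax hu'
    rw [slope_def_field, div_le_iff₀ (sub_pos.2 hax)] at h
    linarith

variable {E : Type*} [NormedAddCommGroup E] [NormedSpace ℝ E] [CompleteSpace E] {h : ℝ → E} {a : ℝ}

theorem hasDerivAt_integral_of_continuousOn_Ici {z : ℝ} (hh : ContinuousOn h (Ici a))
    (hz : a < z) : HasDerivAt (fun x => ∫ t in a..x, h t) (h z) z :=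
  intervalIntegral.integral_hasDerivAt_right
    ((hh.mono (uIcc_of_le hz.le ▸ Icc_subset_Ici_self)).intervalIntegrable)
    ((hh.mono Ioi_subset_Ici_self).stronglyMeasurableAtFilter isOpen_Ioi z hz)
    (hh.continuousAt (Ici_mem_nhds hz))

theorem continuousOn_integral_of_continuousOn_Ici (hh : ContinuousOn h (Ici a)) :
    ContinuousOn (fun x => ∫ t in a..x, h t) (Ici a) := by
  intro z hz
  rcases eq_or_lt_of_le (mem_Ici.1 hz) with rfl | haz
  · exact (intervalIntegral.integral_hasDerivWithinAt_right (t := Ioi a) IntervalIntegrable.refl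
      ((hh.mono Ioi_subset_Ici_self).stronglyMeasurableAtFilter_nhdsWithin measurableSet_Ioi a)
      ((hh a self_mem_Ici).mono Ioi_subset_Ici_self)).continuousWithinAt
  · exact (hasDerivAt_integral_of_continuousOn_Ici hh haz).continuousAt.continuousWithinAt

variable {g g' : ℝ → ℝ}

theorem integrableOn_Ioi_id_mul_deriv_of_nonpos (hg : ContinuousOn g (Ici 0))
    (hg' : ∀ z ∈ Ioi (0 : ℝ), HasDerivAt g (g' z) z) (hg'_nonpos : ∀ z ∈ Ioi (0 : ℝ), g' z ≤ 0)
    (hg_int : IntegrableOn g (Ioi 0)) (hg_top : Tendsto (fun z => z * g z) atTop (𝓝 0)) :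
    IntegrableOn (fun z => z * g' z) (Ioi 0) := by
  refine integrableOn_Ioi_deriv_of_nonpos (g := fun z => z * g z - ∫ t in (0 : ℝ)..z, g t)
    (((continuousOn_id.mul hg).sub (continuousOn_integral_of_continuousOn_Ici hg)) 0 self_mem_Ici)
    (fun z hz => ?_) (fun z hz => mul_nonpos_of_nonneg_of_nonpos (le_of_lt hz) (hg'_nonpos z hz))
    (hg_top.sub (intervalIntegral_tendsto_integral_Ioi 0 hg_int tendsto_id))
  refine (((hasDerivAt_id z).mul (hg' z hz)).sub
    (hasDerivAt_integral_of_continuousOn_Ici hg hz)).congr_deriv ?_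
  simp

theorem integral_Ioi_id_mul_deriv_of_nonpos (hg : ContinuousOn g (Ici 0))
    (hg' : ∀ z ∈ Ioi (0 : ℝ), HasDerivAt g (g' z) z) (hg'_nonpos : ∀ z ∈ Ioi (0 : ℝ), g' z ≤ 0)
    (hg_int : IntegrableOn g (Ioi 0)) (hg_top : Tendsto (fun z => z * g z) atTop (𝓝 0)) :
    ∫ z in Ioi (0 : ℝ), z * g' z = -∫ z in Ioi (0 : ℝ), g z := by
  have h_zero : Tendsto (fun z => z * g z) (𝓝[>] 0) (𝓝 0) := by
    simpa [Pi.mul_def] using ((continuousOn_id.mul hg) 0 self_mem_Ici).tendsto.mono_left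
      (nhdsWithin_mono 0 Ioi_subset_Ici_self)
  simpa using integral_Ioi_mul_deriv_eq_deriv_mul (fun z _ => hasDerivAt_id z) hg'
    (integrableOn_Ioi_id_mul_deriv_of_nonpos hg hg' hg'_nonpos hg_int hg_top)
    (by simpa [Pi.mul_def] using hg_int) h_zero hg_top

end Calculus

/-- `G` is the survival function `z ↦ P(X > z)` of a random variable `X` on `[0, ∞)` with positive
density `f`. Only the values of `G` and `f` on `[0, ∞)` are constrained. -/
structure IsSurvivalFunction (G f : ℝ → ℝ) : Prop where
  density_pos : ∀ z, 0 ≤ z → 0 < f z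
  map_zero : G 0 = 1
  continuousOn : ContinuousOn G (Ici 0)
  hasDerivAt : ∀ z, 0 < z → HasDerivAt G (-f z) z
  tendsto_atTop : Tendsto G atTop (𝓝 0)

/-- The hazard rate `f / G` of a distribution with survival function `G` and density `f`. -/
noncomputable def hazardRate (G f : ℝ → ℝ) (z : ℝ) : ℝ := f z / G z

/-- The virtual valuation `z - G z / f z` of a distribution with survival function `G` and
density `f`. -/
noncomputable def virtualValuation (G f : ℝ → ℝ) (z : ℝ) : ℝ := z - G z / f z

/-- `G` is the survival function of a monotone hazard rate (MHR) distribution with density `f`. -/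
structure IsMHR (G f : ℝ → ℝ) : Prop extends IsSurvivalFunction G f where
  monotoneOn_hazardRate : MonotoneOn (hazardRate G f) (Ici 0)

/-- `ψ` inverts the virtual valuation on `[0, ∞)`: the nonnegative price `ψ y` is the one whose
virtual valuation is `y`. -/
structure IsVirtualValuationInverse (G f ψ : ℝ → ℝ) : Prop where
  mapsTo : MapsTo ψ (Ici 0) (Ici 0)
  rightInvOn : RightInvOn ψ (virtualValuation G f) (Ici 0)

theorem isSurvivalFunction_one_sub {f F : ℝ → ℝ} (hf : ContinuousOn f (Ici 0))
    (hf_pos : ∀ z, 0 ≤ z → 0 < f z) (hF : ∀ z, 0 ≤ z → F z = ∫ t in (0 : ℝ)..z, f t)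
    (hprob : ∫ z in Ioi (0 : ℝ), f z = 1) : IsSurvivalFunction (fun z => 1 - F z) f where
  density_pos := hf_pos
  map_zero := by simp [hF 0 le_rfl]
  continuousOn := continuousOn_const.sub
    ((continuousOn_integral_of_continuousOn_Ici hf).congr fun z hz => hF z hz)
  hasDerivAt z hz := by
    refine ((hasDerivAt_integral_of_continuousOn_Ici hf hz).const_sub 1).congr_of_eventuallyEq ?_
    filter_upwards [Ici_mem_nhds hz] with y hy
    rw [hF y hy]
  tendsto_atTop := by
    have hf_int : IntegrableOn f (Ioi 0) := not_imp_comm.1 integral_undef (by simp [hprob])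
    have h := (intervalIntegral_tendsto_integral_Ioi 0 hf_int tendsto_id).const_sub 1
    rw [hprob, sub_self] at h
    refine h.congr' ?_
    filter_upwards [eventually_ge_atTop 0] with z hz
    rw [hF z hz, id]

namespace IsSurvivalFunction

variable {G f : ℝ → ℝ}

theorem strictAntiOn (hG : IsSurvivalFunction G f) : StrictAntiOn G (Ici 0) := by
  refine strictAntiOn_of_deriv_neg (convex_Ici 0) hG.continuousOn fun z hz => ?_
  rw [interior_Ici] at hz
  rw [(hG.hasDerivAt z hz).deriv]
  exact neg_neg_of_pos (hG.density_pos z (le_of_lt hz))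

theorem pos (hG : IsSurvivalFunction G f) {z : ℝ} (hz : 0 ≤ z) : 0 < G z := by
  have hz' : 0 ≤ z + 1 := by linarith
  have h_nonneg : 0 ≤ G (z + 1) := by
    refine le_of_tendsto hG.tendsto_atTop ?_
    filter_upwards [eventually_ge_atTop (z + 1)] with y hy
    exact hG.strictAntiOn.antitoneOn hz' (hz'.trans hy) hy
  exact h_nonneg.trans_lt (hG.strictAntiOn hz hz' (lt_add_one z))

theorem le_one (hG : IsSurvivalFunction G f) {z : ℝ} (hz : 0 ≤ z) : G z ≤ 1 :=
  hG.map_zero ▸ hG.strictAntiOn.antitoneOn self_mem_Ici hz hz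

theorem hazardRate_pos (hG : IsSurvivalFunction G f) {z : ℝ} (hz : 0 ≤ z) : 0 < hazardRate G f z :=
  div_pos (hG.density_pos z hz) (hG.pos hz)

theorem hasDerivAt_pow_succ (hG : IsSurvivalFunction G f) (n : ℕ) {z : ℝ} (hz : 0 < z) :
    HasDerivAt (fun x => G x ^ (n + 1)) (-((n + 1) * (G z ^ n * f z))) z := by
  refine ((hG.hasDerivAt z hz).pow (n + 1)).congr_deriv ?_
  push_cast [Nat.add_sub_cancel]
  ring

theorem neg_mul_pow_mul_density_nonpos (hG : IsSurvivalFunction G f) (n : ℕ) {z : ℝ} (hz : 0 ≤ z) :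
    -((n + 1) * (G z ^ n * f z)) ≤ 0 := by
  have hGz := hG.pos hz
  have hfz := hG.density_pos z hz
  exact neg_nonpos.2 (by positivity)

theorem hasDerivAt_log (hG : IsSurvivalFunction G f) {z : ℝ} (hz : 0 < z) :
    HasDerivAt (fun x => log (G x)) (-hazardRate G f z) z :=
  ((hG.hasDerivAt z hz).log (hG.pos hz.le).ne').congr_deriv (neg_div _ _)

theorem integrableOn_pow_mul_density (hG : IsSurvivalFunction G f) (n : ℕ) :
    IntegrableOn (fun z => G z ^ n * f z) (Ioi 0) := by
  have h := integrableOn_Ioi_deriv_of_nonpos (hG.continuousOn.pow (n + 1) 0 self_mem_Ici)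
    (fun z hz => hG.hasDerivAt_pow_succ n hz)
    (fun z hz => hG.neg_mul_pow_mul_density_nonpos n (le_of_lt hz))
    (hG.tendsto_atTop.pow (n + 1))
  refine IntegrableOn.congr_fun (h.const_mul (-(n + 1 : ℝ)⁻¹)) (fun z _ => ?_) measurableSet_Ioi
  field_simp

theorem integral_pow_mul_density (hG : IsSurvivalFunction G f) (n : ℕ) :
    ∫ z in Ioi (0 : ℝ), G z ^ n * f z = 1 / (n + 1) := by
  have h := integral_Ioi_of_hasDerivAt_of_nonpos (hG.continuousOn.pow (n + 1) 0 self_mem_Ici)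
    (fun z hz => hG.hasDerivAt_pow_succ n hz)
    (fun z hz => hG.neg_mul_pow_mul_density_nonpos n (le_of_lt hz))
    (hG.tendsto_atTop.pow (n + 1))
  rw [integral_neg, integral_const_mul, Pi.pow_apply, hG.map_zero] at h
  rw [eq_div_iff (by positivity)]
  simp only [one_pow, ne_eq, Nat.succ_ne_zero, not_false_eq_true, zero_pow, zero_sub, neg_inj] at h
  linarith

theorem integrableOn_density (hG : IsSurvivalFunction G f) : IntegrableOn f (Ioi 0) := by
  simpa using hG.integrableOn_pow_mul_density 0

theorem integral_density (hG : IsSurvivalFunction G f) : ∫ z in Ioi (0 : ℝ), f z = 1 := by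
  simpa using hG.integral_pow_mul_density 0

theorem integrableOn_comp_mul (hG : IsSurvivalFunction G f) {u k : ℝ → ℝ}
    (hu : MonotoneOn u (Ici 0)) (hu0 : MapsTo u (Ici 0) (Ici 0)) (hk : IntegrableOn k (Ioi 0)) :
    IntegrableOn (fun z => G (u z) * k z) (Ioi 0) := by
  have h_anti : AntitoneOn (fun z => G (u z)) (Ici 0) := fun x hx y hy hxy =>
    hG.strictAntiOn.antitoneOn (hu0 hx) (hu0 hy) (hu hx hy hxy)
  refine Integrable.bdd_mul (c := 1) hk (aemeasurable_restrict_of_antitoneOn measurableSet_Ioi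
    (h_anti.mono Ioi_subset_Ici_self)).aestronglyMeasurable ?_
  filter_upwards [ae_restrict_mem measurableSet_Ioi] with z hz
  have huz : 0 ≤ u z := hu0 (Ioi_subset_Ici_self hz)
  rw [norm_of_nonneg (hG.pos huz).le]
  exact hG.le_one huz

end IsSurvivalFunction

namespace IsMHR

variable {G f : ℝ → ℝ}

theorem concaveOn_log (hG : IsMHR G f) : ConcaveOn ℝ (Ici 0) (fun z => log (G z)) := by
  refine AntitoneOn.concaveOn_of_deriv (convex_Ici 0)
    (hG.continuousOn.log fun z hz => (hG.pos hz).ne') ?_ ?_ <;> rw [interior_Ici]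
  · exact fun z hz => (hG.hasDerivAt_log hz).differentiableAt.differentiableWithinAt
  · intro y hy z hz hyz
    rw [(hG.hasDerivAt_log hy).deriv, (hG.hasDerivAt_log hz).deriv]
    exact neg_le_neg
      (hG.monotoneOn_hazardRate (Ioi_subset_Ici_self hy) (Ioi_subset_Ici_self hz) hyz)

theorem le_mul_exp (hG : IsMHR G f) {a z : ℝ} (ha : 0 < a) (hz : 0 ≤ z) :
    G z ≤ G a * exp (hazardRate G f a * (a - z)) := by
  have h := le_add_mul_sub_of_concaveOn_of_hasDerivAt hG.concaveOn_log ha.le hz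
    (hG.hasDerivAt_log ha)
  rw [neg_mul_comm, neg_sub] at h
  rwa [← exp_le_exp, exp_add, exp_log (hG.pos hz), exp_log (hG.pos ha.le)] at h

theorem le_mul_exp_mul_exp (hG : IsMHR G f) {a z : ℝ} (ha : 0 < a) (hz : 0 ≤ z) :
    G z ≤ G a * exp (hazardRate G f a * a) * exp (-hazardRate G f a * z) := by
  rw [mul_assoc, ← exp_add, neg_mul, ← sub_eq_add_neg, ← mul_sub]
  exact hG.le_mul_exp ha hz

theorem two_mul_le_sq (hG : IsMHR G f) {z : ℝ} (hz : 0 ≤ z) : G (2 * z) ≤ G z ^ 2 := by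
  have hz2 : 0 ≤ 2 * z := by positivity
  have h := hG.concaveOn_log.2 self_mem_Ici hz2 (one_half_pos (α := ℝ)).le one_half_pos.le
    (add_halves 1)
  simp only [smul_eq_mul, mul_zero, zero_add, hG.map_zero, log_one, one_div,
    inv_mul_cancel_left₀ (two_ne_zero' ℝ)] at h
  rw [← log_le_log_iff (hG.pos hz2) (pow_pos (hG.pos hz) 2), log_pow]
  push_cast
  linarith

theorem integrableOn_survival (hG : IsMHR G f) : IntegrableOn G (Ioi 0) := by
  have h_exp : IntegrableOn (fun z => exp (-hazardRate G f 1 * z)) (Ioi 0) :=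
    integrableOn_exp_mul_Ioi (neg_neg_of_pos (hG.hazardRate_pos zero_le_one)) 0
  refine Integrable.mono' (h_exp.const_mul (G 1 * exp (hazardRate G f 1 * 1)))
    ((hG.continuousOn.mono Ioi_subset_Ici_self).aestronglyMeasurable measurableSet_Ioi) ?_
  filter_upwards [ae_restrict_mem measurableSet_Ioi] with z hz
  rw [norm_of_nonneg (hG.pos (le_of_lt hz)).le]
  exact hG.le_mul_exp_mul_exp one_pos (le_of_lt hz)

theorem integral_survival_le (hG : IsMHR G f) {a : ℝ} (ha : 0 < a) :
    ∫ z in Ioi (0 : ℝ), G z ≤ G a * exp (hazardRate G f a * a) / hazardRate G f a := by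
  have h_neg : -hazardRate G f a < 0 := neg_neg_of_pos (hG.hazardRate_pos ha.le)
  calc ∫ z in Ioi (0 : ℝ), G z
      ≤ ∫ z in Ioi (0 : ℝ), G a * exp (hazardRate G f a * a) * exp (-hazardRate G f a * z) :=
        setIntegral_mono_on hG.integrableOn_survival
          ((integrableOn_exp_mul_Ioi h_neg 0).const_mul _)
          measurableSet_Ioi fun z hz => hG.le_mul_exp_mul_exp ha (le_of_lt hz)
    _ = G a * exp (hazardRate G f a * a) / hazardRate G f a := by
        rw [integral_const_mul, integral_exp_mul_Ioi h_neg, mul_zero, exp_zero, neg_div_neg_eq,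
          mul_one_div]

theorem tendsto_mul_atTop (hG : IsMHR G f) : Tendsto (fun z => z * G z) atTop (𝓝 0) := by
  have h := (tendsto_rpow_mul_exp_neg_mul_atTop_nhds_zero 1 (hazardRate G f 1)
    (hG.hazardRate_pos zero_le_one)).const_mul (G 1 * exp (hazardRate G f 1 * 1))
  simp only [mul_zero, rpow_one] at h
  refine squeeze_zero' ?_ ?_ h <;> filter_upwards [eventually_ge_atTop 0] with z hz
  · exact mul_nonneg hz (hG.pos hz).le
  · have h_le := mul_le_mul_of_nonneg_left (hG.le_mul_exp_mul_exp one_pos hz) hz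
    linarith

theorem integrableOn_pow_succ (hG : IsMHR G f) (n : ℕ) :
    IntegrableOn (fun z => G z ^ (n + 1)) (Ioi 0) := by
  induction n with
  | zero => simpa using hG.integrableOn_survival
  | succ n ih =>
    simpa only [id, pow_succ' _ (n + 1)] using
      hG.integrableOn_comp_mul monotoneOn_id (mapsTo_id _) ih

theorem tendsto_mul_pow_succ_atTop (hG : IsMHR G f) (n : ℕ) :
    Tendsto (fun z => z * G z ^ (n + 1)) atTop (𝓝 0) := by
  have h := hG.tendsto_mul_atTop.mul (hG.tendsto_atTop.pow n)
  rw [zero_mul] at h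
  exact h.congr fun z => by ring

theorem integrableOn_mul_pow_mul_density (hG : IsMHR G f) (n : ℕ) :
    IntegrableOn (fun z => z * (G z ^ n * f z)) (Ioi 0) := by
  have h := integrableOn_Ioi_id_mul_deriv_of_nonpos (hG.continuousOn.pow (n + 1))
    (fun z hz => hG.hasDerivAt_pow_succ n hz)
    (fun z hz => hG.neg_mul_pow_mul_density_nonpos n (le_of_lt hz))
    (hG.integrableOn_pow_succ n) (hG.tendsto_mul_pow_succ_atTop n)
  refine IntegrableOn.congr_fun (h.const_mul (-(n + 1 : ℝ)⁻¹)) (fun z _ => ?_) measurableSet_Ioi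
  field_simp

theorem integral_mul_pow_mul_density (hG : IsMHR G f) (n : ℕ) :
    ∫ z in Ioi (0 : ℝ), z * (G z ^ n * f z) = (∫ z in Ioi (0 : ℝ), G z ^ (n + 1)) / (n + 1) := by
  have h := integral_Ioi_id_mul_deriv_of_nonpos (hG.continuousOn.pow (n + 1))
    (fun z hz => hG.hasDerivAt_pow_succ n hz)
    (fun z hz => hG.neg_mul_pow_mul_density_nonpos n (le_of_lt hz))
    (hG.integrableOn_pow_succ n) (hG.tendsto_mul_pow_succ_atTop n)
  simp only [mul_neg, integral_neg, neg_inj, mul_left_comm _ (n + 1 : ℝ), integral_const_mul] at h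
  rw [eq_div_iff (by positivity), mul_comm]
  exact h

theorem integrableOn_mul_density (hG : IsMHR G f) : IntegrableOn (fun z => z * f z) (Ioi 0) := by
  simpa using hG.integrableOn_mul_pow_mul_density 0

theorem integral_mul_density (hG : IsMHR G f) :
    ∫ z in Ioi (0 : ℝ), z * f z = ∫ z in Ioi (0 : ℝ), G z := by
  simpa using hG.integral_mul_pow_mul_density 0

theorem half_integral_le_integral_sq (hG : IsMHR G f) :
    (∫ z in Ioi (0 : ℝ), G z) / 2 ≤ ∫ z in Ioi (0 : ℝ), G z ^ 2 := by
  calc (∫ z in Ioi (0 : ℝ), G z) / 2 = ∫ z in Ioi (0 : ℝ), G (2 * z) := by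
        rw [integral_comp_mul_left_Ioi G 0 two_pos, mul_zero, smul_eq_mul, div_eq_inv_mul]
    _ ≤ ∫ z in Ioi (0 : ℝ), G z ^ 2 :=
        setIntegral_mono_on
          ((integrableOn_Ioi_comp_mul_left_iff G 0 two_pos).2
            (by simpa using hG.integrableOn_survival))
          (hG.integrableOn_pow_succ 1) measurableSet_Ioi fun z hz => hG.two_mul_le_sq (le_of_lt hz)

theorem integrableOn_sub_const_mul_survival_mul_density (hG : IsMHR G f) (r : ℝ) :
    IntegrableOn (fun z => (z - r) * G z * f z) (Ioi 0) := by
  refine IntegrableOn.congr_fun ((hG.integrableOn_mul_pow_mul_density 1).sub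
    ((hG.integrableOn_pow_mul_density 1).const_mul r)) (fun z _ => ?_) measurableSet_Ioi
  simp only [Pi.sub_apply]
  ring

theorem integral_sub_const_mul_survival_mul_density (hG : IsMHR G f) (r : ℝ) :
    ∫ z in Ioi (0 : ℝ), (z - r) * G z * f z = ((∫ z in Ioi (0 : ℝ), G z ^ 2) - r) / 2 := by
  calc ∫ z in Ioi (0 : ℝ), (z - r) * G z * f z
      = ∫ z in Ioi (0 : ℝ), (z * (G z ^ 1 * f z) - r * (G z ^ 1 * f z)) := by
        congr 1 with z
        ring
    _ = ((∫ z in Ioi (0 : ℝ), G z ^ 2) - r) / 2 := by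
        rw [integral_sub (hG.integrableOn_mul_pow_mul_density 1)
          ((hG.integrableOn_pow_mul_density 1).const_mul r), integral_const_mul,
          hG.integral_mul_pow_mul_density, hG.integral_pow_mul_density]
        push_cast
        ring

theorem strictMonoOn_virtualValuation (hG : IsMHR G f) :
    StrictMonoOn (virtualValuation G f) (Ici 0) := by
  intro y hy z hz hyz
  have h : (hazardRate G f z)⁻¹ ≤ (hazardRate G f y)⁻¹ :=
    inv_anti₀ (hG.hazardRate_pos hy) (hG.monotoneOn_hazardRate hy hz hyz.le)
  simp only [hazardRate, inv_div] at h
  simp only [virtualValuation]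
  linarith

end IsMHR

namespace IsVirtualValuationInverse

variable {G f ψ : ℝ → ℝ}

theorem sub_eq_inv_hazardRate (hψ : IsVirtualValuationInverse G f ψ) {z : ℝ} (hz : 0 ≤ z) :
    ψ z - z = (hazardRate G f (ψ z))⁻¹ := by
  have h : ψ z - G (ψ z) / f (ψ z) = z := hψ.rightInvOn hz
  rw [hazardRate, inv_div]
  linarith

theorem monotoneOn (hψ : IsVirtualValuationInverse G f ψ) (hG : IsMHR G f) :
    MonotoneOn ψ (Ici 0) :=
  Function.monotoneOn_of_rightInvOn_of_mapsTo hG.strictMonoOn_virtualValuation.monotoneOn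
    hψ.rightInvOn hψ.mapsTo

theorem lt_apply (hψ : IsVirtualValuationInverse G f ψ) (hG : IsSurvivalFunction G f) {z : ℝ}
    (hz : 0 ≤ z) : z < ψ z := by
  have h := inv_pos.2 (hG.hazardRate_pos (hψ.mapsTo hz))
  rw [← hψ.sub_eq_inv_hazardRate hz] at h
  exact sub_pos.1 h

theorem exp_neg_one_mul_le (hψ : IsVirtualValuationInverse G f ψ) (hG : IsMHR G f) {z : ℝ}
    (hz : 0 ≤ z) : exp (-1) * G z ≤ G (ψ z) := by
  have hψz : z < ψ z := hψ.lt_apply hG.toIsSurvivalFunction hz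
  have h_exponent : hazardRate G f (ψ z) * (ψ z - z) = 1 := by
    rw [hψ.sub_eq_inv_hazardRate hz, mul_inv_cancel₀ (hG.hazardRate_pos (hψ.mapsTo hz)).ne']
  have h := hG.le_mul_exp (hz.trans_lt hψz) hz
  rw [h_exponent] at h
  rwa [exp_neg, inv_mul_le_iff₀ (exp_pos 1), mul_comm]

theorem exp_neg_one_mul_integral_le (hψ : IsVirtualValuationInverse G f ψ) (hG : IsMHR G f) :
    exp (-1) * ∫ z in Ioi (0 : ℝ), G z ≤ ψ 0 * G (ψ 0) := by
  have hψ0 : 0 < ψ 0 := hψ.lt_apply hG.toIsSurvivalFunction le_rfl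
  have h_hazard : hazardRate G f (ψ 0) = (ψ 0)⁻¹ := by
    rw [← inv_inv (hazardRate G f (ψ 0)), ← hψ.sub_eq_inv_hazardRate le_rfl, sub_zero]
  have h := hG.integral_survival_le hψ0
  rw [h_hazard, inv_mul_cancel₀ hψ0.ne', div_inv_eq_mul] at h
  rw [exp_neg, inv_mul_le_iff₀ (exp_pos 1)]
  linarith

theorem integrableOn_mul_density (hψ : IsVirtualValuationInverse G f ψ) (hG : IsMHR G f) :
    IntegrableOn (fun z => ψ z * f z) (Ioi 0) := by
  have hψ_meas : AEStronglyMeasurable ψ (volume.restrict (Ioi 0)) :=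
    (aemeasurable_restrict_of_monotoneOn measurableSet_Ioi
      ((hψ.monotoneOn hG).mono Ioi_subset_Ici_self)).aestronglyMeasurable
  have h_sub : IntegrableOn (fun z => (ψ z - z) * f z) (Ioi 0) := by
    refine Integrable.bdd_mul (c := (hazardRate G f 0)⁻¹) hG.integrableOn_density
      (hψ_meas.sub measurable_id.aestronglyMeasurable) ?_
    filter_upwards [ae_restrict_mem measurableSet_Ioi] with z hz
    have hψz : 0 ≤ ψ z := hψ.mapsTo (Ioi_subset_Ici_self hz)
    rw [hψ.sub_eq_inv_hazardRate (le_of_lt hz),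
      norm_of_nonneg (inv_nonneg.2 (hG.hazardRate_pos hψz).le)]
    exact inv_anti₀ (hG.hazardRate_pos le_rfl)
      (hG.monotoneOn_hazardRate self_mem_Ici hψz hψz)
  refine IntegrableOn.congr_fun (h_sub.add hG.integrableOn_mul_density) (fun z _ => ?_)
    measurableSet_Ioi
  simp only [Pi.add_apply]
  ring

theorem integrableOn_sub_mul_survival_mul_density (hψ : IsVirtualValuationInverse G f ψ)
    (hG : IsMHR G f) {w : ℝ → ℝ} (hw : IntegrableOn (fun z => w z * f z) (Ioi 0)) :
    IntegrableOn (fun z => (ψ z - w z) * G (ψ z) * f z) (Ioi 0) := by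
  refine IntegrableOn.congr_fun (hG.integrableOn_comp_mul (hψ.monotoneOn hG) hψ.mapsTo
    ((hψ.integrableOn_mul_density hG).sub hw)) (fun z _ => ?_) measurableSet_Ioi
  simp only [Pi.sub_apply]
  ring

theorem integral_revenue_eq (hψ : IsVirtualValuationInverse G f ψ) (hG : IsMHR G f) (r : ℝ) :
    ∫ z in Ioi (0 : ℝ), (ψ z * G (ψ z) + (1 - G (ψ z)) * r) * f z =
      (∫ z in Ioi (0 : ℝ), (ψ z - r) * G (ψ z) * f z) + r := by
  have h_const : IntegrableOn (fun z => r * f z) (Ioi 0) := hG.integrableOn_density.const_mul r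
  calc ∫ z in Ioi (0 : ℝ), (ψ z * G (ψ z) + (1 - G (ψ z)) * r) * f z
      = ∫ z in Ioi (0 : ℝ), ((ψ z - r) * G (ψ z) * f z + r * f z) := by
        congr 1 with z
        ring
    _ = (∫ z in Ioi (0 : ℝ), (ψ z - r) * G (ψ z) * f z) + r := by
        rw [integral_add (hψ.integrableOn_sub_mul_survival_mul_density hG h_const) h_const,
          integral_const_mul, hG.integral_density, mul_one]

theorem exp_neg_one_mul_gap_add_le (hψ : IsVirtualValuationInverse G f ψ) (hG : IsMHR G f)
    {r z : ℝ} (hr : r ≤ ψ 0) (hz : 0 ≤ z) :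
    exp (-1) * ((ψ z - z) * G (ψ z) * f z) + exp (-1) * ((z - r) * G z * f z) ≤
      (ψ z - r) * G (ψ z) * f z := by
  have hψz : z ≤ ψ z := (hψ.lt_apply hG.toIsSurvivalFunction hz).le
  have h := mul_sub_add_mul_sub_le (exp_pos (-1)).le (exp_le_one_iff.2 neg_one_lt_zero.le)
    (hG.pos (hψ.mapsTo hz)).le (hG.strictAntiOn.antitoneOn hz (hψ.mapsTo hz) hψz)
    (hψ.exp_neg_one_mul_le hG hz) hψz (hr.trans (hψ.monotoneOn hG self_mem_Ici hz hz))
  linarith [mul_le_mul_of_nonneg_right h (hG.density_pos z hz).le]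

theorem exp_neg_one_mul_integral_gap_add_le (hψ : IsVirtualValuationInverse G f ψ)
    (hG : IsMHR G f) {r : ℝ} (hr : r ≤ ψ 0) :
    exp (-1) * (∫ z in Ioi (0 : ℝ), (ψ z - z) * G (ψ z) * f z) +
        exp (-1) * (((∫ z in Ioi (0 : ℝ), G z ^ 2) - r) / 2) ≤
      ∫ z in Ioi (0 : ℝ), (ψ z - r) * G (ψ z) * f z := by
  have h_gap : IntegrableOn (fun z => exp (-1) * ((ψ z - z) * G (ψ z) * f z)) (Ioi 0) :=
    (hψ.integrableOn_sub_mul_survival_mul_density hG hG.integrableOn_mul_density).const_mul _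
  have h_surplus : IntegrableOn (fun z => exp (-1) * ((z - r) * G z * f z)) (Ioi 0) :=
    (hG.integrableOn_sub_const_mul_survival_mul_density r).const_mul _
  rw [← hG.integral_sub_const_mul_survival_mul_density r, ← integral_const_mul,
    ← integral_const_mul, ← integral_add h_gap h_surplus]
  exact setIntegral_mono_on (h_gap.add h_surplus)
    (hψ.integrableOn_sub_mul_survival_mul_density hG (hG.integrableOn_density.const_mul r))
    measurableSet_Ioi fun z hz => hψ.exp_neg_one_mul_gap_add_le hG hr (le_of_lt hz)

theorem integral_revenue_ge (hψ : IsVirtualValuationInverse G f ψ) (hG : IsMHR G f) :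
    exp (-1) * (∫ z in Ioi (0 : ℝ), (ψ z - z) * G (ψ z) * f z) +
        (5 / 4 * exp (-1) - exp (-1) ^ 2 / 2) * ∫ z in Ioi (0 : ℝ), z * f z ≤
      ∫ z in Ioi (0 : ℝ), (ψ z * G (ψ z) + (1 - G (ψ z)) * (ψ 0 * G (ψ 0))) * f z := by
  have hψ0 : 0 ≤ ψ 0 := hψ.mapsTo self_mem_Ici
  have hc : exp (-1) ≤ 1 := exp_le_one_iff.2 neg_one_lt_zero.le
  have h_pointwise := hψ.exp_neg_one_mul_integral_gap_add_le hG
    (mul_le_of_le_one_right hψ0 (hG.le_one hψ0))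
  have h_sq := mul_le_mul_of_nonneg_left hG.half_integral_le_integral_sq (exp_pos (-1)).le
  have h_monopoly := mul_le_mul_of_nonneg_left (hψ.exp_neg_one_mul_integral_le hG)
    (show 0 ≤ 1 - exp (-1) / 2 by linarith)
  rw [hψ.integral_revenue_eq hG, hG.integral_mul_density]
  linarith

end IsVirtualValuationInverse

theorem stmt_9
(f F : ℝ → ℝ)
    (hf_cont : ContinuousOn f (Ici 0))
    (hf_pos : ∀ z ∈ Ici (0:ℝ), 0 < f z)
    (hF : ∀ z ∈ Ici (0:ℝ), F z = ∫ t in (0:ℝ)..z, f t)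
    (hF_lt : ∀ z ∈ Ici (0:ℝ), F z < 1)
    (hprob : ∫ z in Ioi (0:ℝ), f z = 1)
(hMHR : ∀ y z : ℝ, 0 ≤ y → y ≤ z → f y / (1 - F y) ≤ f z / (1 - F z))
(φ ψ : ℝ → ℝ)
    (hφ : ∀ z ∈ Ici (0:ℝ), φ z = z - (1 - F z) / f z)
    (hφ_mono : StrictMonoOn φ (Ici 0))
    (hφ_top : Filter.Tendsto φ Filter.atTop Filter.atTop)
    (hψ : ∀ y ∈ Ici (0:ℝ), ψ y ∈ Ici (0:ℝ) ∧ φ (ψ y) = y)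
(hmean : IntegrableOn (fun z => z * f z) (Ioi 0)) :
    ∫ z in Ioi (0:ℝ), (ψ z * (1 - F (ψ z)) + F (ψ z) * (ψ 0 * (1 - F (ψ 0)))) * f z
      ≥ (1 / Real.exp 1) * (∫ z in Ioi (0:ℝ), (ψ z - z) * (1 - F (ψ z)) * f z)
        + (5 / (4 * Real.exp 1) - 1 / (2 * Real.exp 1 ^ 2)) * ∫ z in Ioi (0:ℝ), z * f z := by
  have hG : IsMHR (fun z => 1 - F z) f :=
    { isSurvivalFunction_one_sub hf_cont hf_pos hF hprob with
      monotoneOn_hazardRate := fun y hy z _ hyz => hMHR y z hy hyz }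
  have hψ' : IsVirtualValuationInverse (fun z => 1 - F z) f ψ :=
    ⟨fun y hy => (hψ y hy).1, fun y hy => (hφ _ (hψ y hy).1).symm.trans (hψ y hy).2⟩
  have h_coeff : 5 / (4 * exp 1) - 1 / (2 * exp 1 ^ 2) = 5 / 4 * exp (-1) - exp (-1) ^ 2 / 2 := by
    rw [exp_neg]
    field_simp
  have h_revenue := hψ'.integral_revenue_ge hG
  rw [ge_iff_le, h_coeff, one_div, ← exp_neg]
  simpa only [sub_sub_cancel] using h_revenue
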